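/- arXiv:1704.03433 — 6 statements merged into one kernel-verified Lean document; each statement's English description precedes it below -/
import Mathlib

section
/- Let G be a finite group. The set Sec(G) of sections of G, ordered componentwise, is a lattice: for sections (P1,K1) and (P2,K2), the pair (P1 ⊓ P2, K1 ⊓ K2) is a section of G and is the greatest lower bound, and the pair (P1 ⊔ P2, N), where N is the normal closure of K1 ⊔ K2 in P1 ⊔ P2, is a section of G and is the least upper bound. -/
/-!
Normality is inherited by intersections, which settles the meet. For the join, `N` is the least
subgroup in the family of subgroups containing `K₁ ⊔ K₂` and stable under conjugation by
`P₁ ⊔ P₂`. The family contains `P₁ ⊔ P₂` itself, so `N ≤ P₁ ⊔ P₂`. For any section `(Q, M)` above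
both given ones, `M` is stable under conjugation by `Q ≥ P₁ ⊔ P₂`, hence belongs to the family
(it need not lie inside `P₁ ⊔ P₂`), so `N ≤ M`.
-/

/-- A section of a group `G` is a pair `(P, K)` of subgroups of `G`
with `K` a normal subgroup of `P`. -/
def IsSection {G : Type*} [Group G] (P K : Subgroup G) : Prop :=
  K ≤ P ∧ ∀ p ∈ P, ∀ k ∈ K, p * k * p⁻¹ ∈ K

/-- The set of sections of a finite group `G`, ordered componentwise, is a lattice:
the componentwise meet `(P₁ ⊓ P₂, K₁ ⊓ K₂)` is a section and is the greatest lower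
bound, and `(P₁ ⊔ P₂, N)`, where `N` is the normal closure of `K₁ ⊔ K₂` in
`P₁ ⊔ P₂`, is a section and is the least upper bound. -/
theorem sections_form_a_lattice {G : Type*} [Group G] [Fintype G]
    (P₁ K₁ P₂ K₂ : Subgroup G) (h₁ : IsSection P₁ K₁) (h₂ : IsSection P₂ K₂) :
    (IsSection (P₁ ⊓ P₂) (K₁ ⊓ K₂) ∧
      (P₁ ⊓ P₂ ≤ P₁ ∧ K₁ ⊓ K₂ ≤ K₁) ∧ (P₁ ⊓ P₂ ≤ P₂ ∧ K₁ ⊓ K₂ ≤ K₂) ∧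
      ∀ Q M : Subgroup G, IsSection Q M → Q ≤ P₁ → M ≤ K₁ → Q ≤ P₂ → M ≤ K₂ →
        Q ≤ P₁ ⊓ P₂ ∧ M ≤ K₁ ⊓ K₂) ∧
    (∀ N : Subgroup G,
      N = sInf {M : Subgroup G | K₁ ⊔ K₂ ≤ M ∧ ∀ p ∈ P₁ ⊔ P₂, ∀ k ∈ M, p * k * p⁻¹ ∈ M} →
      IsSection (P₁ ⊔ P₂) N ∧
        (P₁ ≤ P₁ ⊔ P₂ ∧ K₁ ≤ N) ∧ (P₂ ≤ P₁ ⊔ P₂ ∧ K₂ ≤ N) ∧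
        ∀ Q M : Subgroup G, IsSection Q M → P₁ ≤ Q → K₁ ≤ M → P₂ ≤ Q → K₂ ≤ M →
          P₁ ⊔ P₂ ≤ Q ∧ N ≤ M) := by
  refine ⟨⟨⟨inf_le_inf h₁.1 h₂.1, fun p hp k hk =>
      ⟨h₁.2 p hp.1 k hk.1, h₂.2 p hp.2 k hk.2⟩⟩,
    ⟨inf_le_left, inf_le_left⟩, ⟨inf_le_right, inf_le_right⟩,
    fun Q M _ hQ₁ hM₁ hQ₂ hM₂ => ⟨le_inf hQ₁ hQ₂, le_inf hM₁ hM₂⟩⟩, ?_⟩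
  rintro N rfl
  have hK : K₁ ⊔ K₂ ≤ sInf {M : Subgroup G |
      K₁ ⊔ K₂ ≤ M ∧ ∀ p ∈ P₁ ⊔ P₂, ∀ k ∈ M, p * k * p⁻¹ ∈ M} :=
    le_sInf fun M hM => hM.1
  refine ⟨⟨sInf_le ⟨sup_le_sup h₁.1 h₂.1, fun p hp k hk =>
      mul_mem (mul_mem hp hk) (inv_mem hp)⟩, fun p hp k hk => ?_⟩,
    ⟨le_sup_left, le_sup_left.trans hK⟩, ⟨le_sup_right, le_sup_right.trans hK⟩,
    fun Q M hQM hP₁ hK₁ hP₂ hK₂ => ⟨sup_le hP₁ hP₂,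
      sInf_le ⟨sup_le hK₁ hK₂, fun p hp => hQM.2 p (sup_le hP₁ hP₂ hp)⟩⟩⟩
  rw [Subgroup.mem_sInf] at hk ⊢
  exact fun M hM => hM.2 p hp k (hk M hM)
end

section
/- Let G be a finite group and let (P',K') ≤ (P,K) be sections of G. Then there exists a unique pair of sections (S', S) of G such that (P',K') ≤_P S' ≤_{P/K} S ≤_K (P,K), namely S' = (P', K ⊓ P') and S = (P'K, K). Consequently, the componentwise partial order on Sec(G) decomposes as the relation product ≤ = ≤_K ∘ ≤_{P/K} ∘ ≤_P. -/
/-- The componentwise order on pairs of subgroups. -/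
def secLE {G : Type*} [Group G] (s t : Subgroup G × Subgroup G) : Prop :=
  s.1 ≤ t.1 ∧ s.2 ≤ t.2

/-- `(P',K') ≤_P (P,K)`: comparable sections with the same top group. -/
def secLEP {G : Type*} [Group G] (s t : Subgroup G × Subgroup G) : Prop :=
  secLE s t ∧ s.1 = t.1

/-- `(P',K') ≤_K (P,K)`: comparable sections with the same bottom group. -/
def secLEK {G : Type*} [Group G] (s t : Subgroup G × Subgroup G) : Prop :=
  secLE s t ∧ s.2 = t.2

/-- `(P',K') ≤_{P/K} (P,K)`: comparable sections for which the canonical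
homomorphism `P'/K' → P/K` is an isomorphism; equivalently `K ⊓ P' = K'`
and `P'K = P`. -/
def secLEPK {G : Type*} [Group G] (s t : Subgroup G × Subgroup G) : Prop :=
  secLE s t ∧ t.2 ⊓ s.1 = s.2 ∧ s.1 ⊔ t.2 = t.1

theorem intermediate_sections {G : Type*} [Group G] {P' K' P K : Subgroup G}
    (h' : IsSection P' K') (h : IsSection P K) (hle : secLE (P', K') (P, K)) :
    IsSection P' (K ⊓ P') ∧ IsSection (P' ⊔ K) K ∧
      secLEP (P', K') (P', K ⊓ P') ∧ secLEPK (P', K ⊓ P') (P' ⊔ K, K) ∧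
      secLEK (P' ⊔ K, K) (P, K) := by
  obtain ⟨hP, hK⟩ := hle
  have hsup : P' ⊔ K ≤ P := sup_le hP h.1
  refine ⟨⟨inf_le_right, fun p hp k hk => ⟨h.2 p (hP hp) k hk.1, ?_⟩⟩,
    ⟨le_sup_right, fun p hp k hk => h.2 p (hsup hp) k hk⟩,
    ⟨⟨le_rfl, le_inf hK h'.1⟩, rfl⟩,
    ⟨⟨le_sup_left, inf_le_left⟩, rfl, rfl⟩,
    ⟨⟨hsup, le_rfl⟩, rfl⟩⟩
  exact P'.mul_mem (P'.mul_mem hp hk.2) (P'.inv_mem hp)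

/-- For sections `(P',K') ≤ (P,K)` of a finite group `G` there is a unique pair of
sections `(S', S)` with `(P',K') ≤_P S' ≤_{P/K} S ≤_K (P,K)`, namely
`S' = (P', K ⊓ P')` and `S = (P'K, K)`; consequently the componentwise order on
sections decomposes as the relation product `≤ = ≤_K ∘ ≤_{P/K} ∘ ≤_P`. -/
theorem sec_order_decomposition {G : Type*} [Group G] [Fintype G]
    (P' K' P K : Subgroup G) (h' : IsSection P' K') (h : IsSection P K)
    (hle : secLE (P', K') (P, K)) :
    (∃! S : (Subgroup G × Subgroup G) × (Subgroup G × Subgroup G),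
        IsSection S.1.1 S.1.2 ∧ IsSection S.2.1 S.2.2 ∧
        secLEP (P', K') S.1 ∧ secLEPK S.1 S.2 ∧ secLEK S.2 (P, K)) ∧
    (IsSection P' (K ⊓ P') ∧ IsSection (P' ⊔ K) K ∧
      secLEP (P', K') (P', K ⊓ P') ∧ secLEPK (P', K ⊓ P') (P' ⊔ K, K) ∧
      secLEK (P' ⊔ K, K) (P, K)) ∧
    (∀ s t : Subgroup G × Subgroup G, IsSection s.1 s.2 → IsSection t.1 t.2 →
      (secLE s t ↔ ∃ a b : Subgroup G × Subgroup G,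
        IsSection a.1 a.2 ∧ IsSection b.1 b.2 ∧
        secLEP s a ∧ secLEPK a b ∧ secLEK b t)) := by
  have key := intermediate_sections h' h hle
  refine ⟨⟨((P', K ⊓ P'), (P' ⊔ K, K)), key, ?_⟩, key, ?_⟩
  · rintro ⟨⟨a, b⟩, ⟨c, d⟩⟩ ⟨-, -, ⟨-, ha⟩, ⟨-, hb, hc⟩, ⟨-, hd⟩⟩
    dsimp only at ha hb hc hd
    subst ha hd hb hc
    rfl
  · rintro ⟨P₁, K₁⟩ ⟨P₂, K₂⟩ hs ht
    constructor
    · intro hst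
      exact ⟨(P₁, K₂ ⊓ P₁), (P₁ ⊔ K₂, K₂), intermediate_sections hs ht hst⟩
    · rintro ⟨a, b, -, -, ⟨h₁, -⟩, ⟨h₂, -⟩, ⟨h₃, -⟩⟩
      exact ⟨h₁.1.trans (h₂.1.trans h₃.1), h₁.2.trans (h₂.2.trans h₃.2)⟩
end

section
/- Let G be a finite group acting on Sec(G) by componentwise conjugation, and let ρ : Sec(G)/G → Sec(G) be any function with ρ(q) ∈ q for every conjugacy class q of sections. Then for all sections a and d of G, the number of sections a' in the G-orbit of a with d ≤ a' equals the sum, over all pairs of conjugacy classes (q1, q2) of sections of G, of the product: (number of a' in the G-orbit of a with ρ(q1) ≤_K a') × (number of b' in the G-orbit of ρ(q1) with ρ(q2) ≤_{P/K} b') × (number of c' in the G-orbit of ρ(q2) with d ≤_P c'). -/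
/-- Componentwise conjugation of a pair of subgroups by a group element. -/
def secConj {G : Type*} [Group G] (g : G) (s : Subgroup G × Subgroup G) :
    Subgroup G × Subgroup G :=
  (s.1.map (MulAut.conj g).toMonoidHom, s.2.map (MulAut.conj g).toMonoidHom)

theorem secConj_mul {G : Type*} [Group G] (g h : G) (s : Subgroup G × Subgroup G) :
    secConj (g * h) s = secConj g (secConj h s) := by
  simp only [secConj, Subgroup.map_map, map_mul]
  rfl

theorem secConj_one {G : Type*} [Group G] (s : Subgroup G × Subgroup G) :
    secConj 1 s = s := by
  simp only [secConj, map_one]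
  exact Prod.ext (Subgroup.map_id _) (Subgroup.map_id _)

theorem secConj_inv_secConj {G : Type*} [Group G] (g : G) (s : Subgroup G × Subgroup G) :
    secConj g⁻¹ (secConj g s) = s := by
  rw [← secConj_mul, inv_mul_cancel, secConj_one]

theorem secConj_secConj_inv {G : Type*} [Group G] (g : G) (s : Subgroup G × Subgroup G) :
    secConj g (secConj g⁻¹ s) = s := by
  rw [← secConj_mul, mul_inv_cancel, secConj_one]

theorem IsSection.secConj {G : Type*} [Group G] {s : Subgroup G × Subgroup G}
    (h : IsSection s.1 s.2) (g : G) : IsSection (secConj g s).1 (secConj g s).2 := by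
  refine ⟨Subgroup.map_mono h.1, ?_⟩
  rintro _ ⟨p, hp, rfl⟩ _ ⟨k, hk, rfl⟩
  exact ⟨p * k * p⁻¹, h.2 p hp k hk, by simp [mul_assoc]⟩

theorem secLE_secConj {G : Type*} [Group G] {s t : Subgroup G × Subgroup G} (g : G)
    (h : secLE s t) : secLE (secConj g s) (secConj g t) :=
  ⟨Subgroup.map_mono h.1, Subgroup.map_mono h.2⟩

theorem secLEK_secConj {G : Type*} [Group G] {s t : Subgroup G × Subgroup G} (g : G)
    (h : secLEK s t) : secLEK (secConj g s) (secConj g t) :=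
  ⟨secLE_secConj g h.1, congrArg (Subgroup.map _) h.2⟩

theorem secLEPK_secConj {G : Type*} [Group G] {s t : Subgroup G × Subgroup G} (g : G)
    (h : secLEPK s t) : secLEPK (secConj g s) (secConj g t) := by
  refine ⟨secLE_secConj g h.1, ?_, ?_⟩
  · exact (Subgroup.map_inf _ _ _ (MulAut.conj g).injective).symm.trans
      (congrArg (Subgroup.map _) h.2.1)
  · exact (Subgroup.map_sup _ _ _).symm.trans (congrArg (Subgroup.map _) h.2.2)

/-- The class incidence number of a relation `R` on pairs of subgroups: the number of conjugates
`y'` of `y` with `R x y'`. -/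
noncomputable def incid {G : Type*} [Group G]
    (R : Subgroup G × Subgroup G → Subgroup G × Subgroup G → Prop)
    (x y : Subgroup G × Subgroup G) : ℕ :=
  Set.ncard {y' : Subgroup G × Subgroup G | (∃ g : G, secConj g y = y') ∧ R x y'}

/-- Conjugation by `g` is a bijection between the sets counted by the two incidence numbers. -/
theorem incid_conj {G : Type*} [Group G]
    {R : Subgroup G × Subgroup G → Subgroup G × Subgroup G → Prop}
    (hR : ∀ (g : G) (s t), R s t → R (secConj g s) (secConj g t))
    (g : G) (x y : Subgroup G × Subgroup G) : incid R (secConj g x) y = incid R x y := by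
  symm
  refine Set.ncard_congr (fun z _ => secConj g z) ?_ ?_ ?_
  · rintro _ ⟨⟨h, rfl⟩, hx⟩
    exact ⟨⟨g * h, secConj_mul _ _ _⟩, hR g _ _ hx⟩
  · intro z w _ _ h
    rw [← secConj_inv_secConj g z, ← secConj_inv_secConj g w]
    exact congrArg _ h
  · rintro _ ⟨⟨h, rfl⟩, hx⟩
    refine ⟨secConj g⁻¹ (secConj h y), ⟨⟨g⁻¹ * h, secConj_mul _ _ _⟩, ?_⟩,
      secConj_secConj_inv _ _⟩
    have := hR g⁻¹ _ _ hx
    rwa [secConj_inv_secConj] at this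

open Classical in
theorem incid_eq_card {G : Type*} [Group G] [Fintype G]
    (R : Subgroup G × Subgroup G → Subgroup G × Subgroup G → Prop)
    (x y : Subgroup G × Subgroup G) :
    incid R x y = (Finset.univ.filter fun y' => (∃ g : G, secConj g y = y') ∧ R x y').card := by
  rw [incid, ← Set.ncard_coe_finset]
  simp

open Classical in
/-- A class function summed over the sections above `x` can be collected along a transversal of
the classes, each class being weighted by the number of its members above `x`. -/
theorem sum_incid {G : Type*} [Group G] [Fintype G]
    (T : Finset (Subgroup G × Subgroup G))
    (hTsec : ∀ t ∈ T, IsSection t.1 t.2)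
    (hT : ∀ s : Subgroup G × Subgroup G, IsSection s.1 s.2 →
      ∃! t, t ∈ T ∧ ∃ g : G, secConj g s = t)
    (R : Subgroup G × Subgroup G → Subgroup G × Subgroup G → Prop)
    (f : Subgroup G × Subgroup G → ℕ) (hf : ∀ (g : G) s, f (secConj g s) = f s)
    (x : Subgroup G × Subgroup G) :
    ∑ t ∈ T, f t * incid R x t =
      ∑ b ∈ Finset.univ.filter (fun b => IsSection b.1 b.2 ∧ R x b), f b := by
  choose! rep hrep huniq using hT
  rw [← Finset.sum_fiberwise_of_maps_to (t := T) (g := rep)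
    (s := Finset.univ.filter fun b => IsSection b.1 b.2 ∧ R x b)]
  · refine Finset.sum_congr rfl fun t ht => ?_
    rw [incid_eq_card, mul_comm, ← smul_eq_mul, ← Finset.sum_const, Finset.filter_filter]
    refine Finset.sum_congr ?_ ?_
    · ext b
      simp only [Finset.mem_filter, Finset.mem_univ, true_and]
      constructor
      · rintro ⟨⟨g, rfl⟩, hx⟩
        have hs := (hTsec t ht).secConj g
        exact ⟨⟨hs, hx⟩, (huniq _ hs t ⟨ht, g⁻¹, secConj_inv_secConj g t⟩).symm⟩
      · rintro ⟨⟨hs, hx⟩, rfl⟩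
        obtain ⟨-, g, hg⟩ := hrep b hs
        exact ⟨⟨g⁻¹, by rw [← hg, secConj_inv_secConj]⟩, hx⟩
    · intro b hb
      simp only [Finset.mem_filter, Finset.mem_univ, true_and] at hb
      obtain ⟨⟨hs, -⟩, rfl⟩ := hb
      obtain ⟨-, g, hg⟩ := hrep b hs
      rw [← hg, hf]
  · intro b hb
    exact (hrep b (Finset.mem_filter.1 hb).2.1).1

/-- If `P` normalizes `K`, then `K` is the bottom group of a section with top `P ⊔ K`. -/
theorem isSection_sup {G : Type*} [Group G] {P K : Subgroup G}
    (h : ∀ p ∈ P, ∀ k ∈ K, p * k * p⁻¹ ∈ K) : IsSection (P ⊔ K) K := by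
  refine ⟨le_sup_right, fun p hp k hk => ?_⟩
  have hP : P ≤ Subgroup.normalizer (K : Set G) := by
    intro p hp
    rw [Subgroup.mem_normalizer_iff]
    refine fun k => ⟨fun hk => h p hp k hk, fun hk => ?_⟩
    have := h p⁻¹ (inv_mem hp) _ hk
    simpa [mul_assoc] using this
  have hle : P ⊔ K ≤ Subgroup.normalizer (K : Set G) := sup_le hP Subgroup.le_normalizer
  exact (Subgroup.mem_normalizer_iff.1 (hle hp) k).1 hk

open Classical in
/-- Every `a' ≥ d` is the end of exactly one chain `d ≤_P c ≤_{P/K} b ≤_K a'` of sections, so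
counting the `a'` in the orbit of `a` above `d` amounts to counting these chains. -/
theorem card_chains {G : Type*} [Group G] [Fintype G]
    (a d : Subgroup G × Subgroup G)
    (ha : IsSection a.1 a.2) (hd : IsSection d.1 d.2) :
    incid secLE d a =
      ∑ c ∈ Finset.univ.filter (fun c => IsSection c.1 c.2 ∧ secLEP d c),
      ∑ b ∈ Finset.univ.filter (fun b => IsSection b.1 b.2 ∧ secLEPK c b),
        incid secLEK b a := by
  simp only [incid_eq_card]
  simp only [← Finset.card_sigma]
  refine Finset.card_nbij'
    (fun a' => ⟨(d.1, a'.2 ⊓ d.1), ⟨(d.1 ⊔ a'.2, a'.2), a'⟩⟩) (fun s => s.2.2) ?_ ?_ ?_ ?_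
  · intro a' h
    simp only [Finset.coe_filter, Finset.mem_univ, true_and, Set.mem_ofPred_eq] at h
    obtain ⟨⟨g, hg⟩, h1, h2⟩ := h
    have hs := ha.secConj g
    rw [hg] at hs
    have hn : ∀ p ∈ d.1, ∀ k ∈ a'.2, p * k * p⁻¹ ∈ a'.2 := fun p hp => hs.2 p (h1 hp)
    simp only [Finset.coe_sigma, Set.mem_sigma_iff, Finset.coe_filter, Finset.mem_univ, true_and,
      Set.mem_ofPred_eq]
    refine ⟨⟨⟨inf_le_right, fun p hp k hk => ⟨hn p hp k hk.1, ?_⟩⟩,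
      ⟨le_rfl, le_inf h2 hd.1⟩, rfl⟩, ?_⟩
    · exact d.1.mul_mem (d.1.mul_mem hp hk.2) (d.1.inv_mem hp)
    · exact ⟨⟨isSection_sup hn, ⟨le_sup_left, inf_le_left⟩, rfl, rfl⟩, ⟨g, hg⟩,
        ⟨sup_le h1 hs.1, le_rfl⟩, rfl⟩
  · rintro ⟨c, b, a'⟩ h
    simp only [Finset.coe_sigma, Set.mem_sigma_iff, Finset.coe_filter, Finset.mem_univ, true_and,
      Set.mem_ofPred_eq] at h ⊢
    obtain ⟨⟨-, h1, -⟩, ⟨-, h2, -⟩, h3, h4, -⟩ := h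
    exact ⟨h3, h1.1.trans (h2.1.trans h4.1), h1.2.trans (h2.2.trans h4.2)⟩
  · exact fun _ _ => rfl
  · rintro ⟨⟨cP, cK⟩, ⟨bP, bK⟩, a'⟩ h
    simp only [Finset.coe_sigma, Set.mem_sigma_iff, Finset.coe_filter, Finset.mem_univ, true_and,
      Set.mem_ofPred_eq] at h
    obtain ⟨⟨-, -, h1⟩, ⟨-, -, h2, h3⟩, -, -, h4⟩ := h
    dsimp only at h1 h2 h3 h4
    subst h1 h4 h2 h3
    rfl

/-- Decomposition of the class incidence matrix of the sections of a finite group `G`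
as a product of the class incidence matrices of `≤_K`, `≤_{P/K}` and `≤_P`:
if `T` is a transversal of the conjugacy classes of sections of `G` (i.e. a choice
`ρ(q) ∈ q` of a representative of each class `q`), then for all sections `a`, `d`
the number of sections in the orbit of `a` above `d` is the sum over pairs of classes
of the corresponding products of class incidence numbers. -/
theorem class_incidence_matrix_decomposition {G : Type*} [Group G] [Fintype G]
    (T : Set (Subgroup G × Subgroup G))
    (hTsec : ∀ t ∈ T, IsSection t.1 t.2)
    (hT : ∀ s : Subgroup G × Subgroup G, IsSection s.1 s.2 →
      ∃! t, t ∈ T ∧ ∃ g : G, secConj g s = t)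
    (a d : Subgroup G × Subgroup G)
    (ha : IsSection a.1 a.2) (hd : IsSection d.1 d.2) :
    Set.ncard {a' : Subgroup G × Subgroup G | (∃ g : G, secConj g a = a') ∧ secLE d a'} =
    ∑ᶠ t₁ ∈ T, ∑ᶠ t₂ ∈ T,
      Set.ncard {a' : Subgroup G × Subgroup G |
          (∃ g : G, secConj g a = a') ∧ secLEK t₁ a'} *
      (Set.ncard {b' : Subgroup G × Subgroup G |
          (∃ g : G, secConj g t₁ = b') ∧ secLEPK t₂ b'} *
       Set.ncard {c' : Subgroup G × Subgroup G |
          (∃ g : G, secConj g t₂ = c') ∧ secLEP d c'}) := by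
  classical
  obtain ⟨T, rfl⟩ : ∃ T' : Finset (Subgroup G × Subgroup G), ↑T' = T :=
    ⟨(Set.toFinite T).toFinset, Set.Finite.coe_toFinset _⟩
  simp only [Finset.mem_coe] at hTsec hT
  change incid secLE d a = ∑ᶠ t₁ ∈ (T : Set (Subgroup G × Subgroup G)),
    ∑ᶠ t₂ ∈ (T : Set (Subgroup G × Subgroup G)),
      incid secLEK t₁ a * (incid secLEPK t₂ t₁ * incid secLEP d t₂)
  simp only [finsum_mem_coe_finset, ← Finset.mul_sum]
  rw [card_chains a d ha hd]
  have h₂ (t₁) := sum_incid T hTsec hT secLEP (fun s => incid secLEPK s t₁)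
    (fun g s => incid_conj (fun g _ _ => secLEPK_secConj g) g s t₁) d
  simp only [h₂, Finset.mul_sum]
  rw [Finset.sum_comm]
  exact Finset.sum_congr rfl fun c _ => (sum_incid T hTsec hT secLEPK (fun s => incid secLEK s a)
    (fun g s => incid_conj (fun g _ _ => secLEK_secConj g) g s _) c).symm
end

section
/- Let G be a finite group and let (P',K') and (P,K) be sections of G with (P',K') ≤' (P,K), i.e. P' ≤ P and K ⊓ P' ≤ K'. Then there exists a unique pair of sections (S1, S2) of G such that S1 ≤_K (P,K), S2 ≤_P (P',K'), and S2 ≤_{P/K} S1; namely S1 = (P'K, K) and S2 = (P', K ⊓ P'). Consequently, ≤' = ≤_K ∘ ≤_{P/K} ∘ ≥_P as relations on Sec(G). -/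
/-- The relation `≤'` on sections: `(P',K') ≤' (P,K)` iff `P' ≤ P` and `K ⊓ P' ≤ K'`. -/
def secLE' {G : Type*} [Group G] (s t : Subgroup G × Subgroup G) : Prop :=
  s.1 ≤ t.1 ∧ t.2 ⊓ s.1 ≤ s.2

theorem secLE'_decomp_exists {G : Type*} [Group G] {P' K' P K : Subgroup G}
    (h : IsSection P K) (hle : secLE' (P', K') (P, K)) :
    IsSection (P' ⊔ K) K ∧ IsSection P' (K ⊓ P') ∧
      secLEK (P' ⊔ K, K) (P, K) ∧ secLEP (P', K ⊓ P') (P', K') ∧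
      secLEPK (P', K ⊓ P') (P' ⊔ K, K) := by
  obtain ⟨hKP, hn⟩ := h
  obtain ⟨hP, hK⟩ := hle
  have hsup : P' ⊔ K ≤ P := sup_le hP hKP
  refine ⟨⟨le_sup_right, fun p hp => hn p (hsup hp)⟩, ⟨inf_le_right, fun p hp k hk => ?_⟩,
    ⟨⟨hsup, le_rfl⟩, rfl⟩, ⟨⟨le_rfl, hK⟩, rfl⟩, ⟨le_sup_left, inf_le_left⟩, rfl, rfl⟩
  exact ⟨hn p (hP hp) k hk.1, P'.mul_mem (P'.mul_mem hp hk.2) (P'.inv_mem hp)⟩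

/-- For sections `(P',K') ≤' (P,K)` of a finite group `G` there is a unique pair of
sections `(S₁, S₂)` with `S₁ ≤_K (P,K)`, `S₂ ≤_P (P',K')` and `S₂ ≤_{P/K} S₁`,
namely `S₁ = (P'K, K)` and `S₂ = (P', K ⊓ P')`; consequently
`≤' = ≤_K ∘ ≤_{P/K} ∘ ≥_P` as relations on sections. -/
theorem secLE'_decomposition {G : Type*} [Group G] [Fintype G]
    (P' K' P K : Subgroup G) (h' : IsSection P' K') (h : IsSection P K)
    (hle : secLE' (P', K') (P, K)) :
    (∃! S : (Subgroup G × Subgroup G) × (Subgroup G × Subgroup G),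
        IsSection S.1.1 S.1.2 ∧ IsSection S.2.1 S.2.2 ∧
        secLEK S.1 (P, K) ∧ secLEP S.2 (P', K') ∧ secLEPK S.2 S.1) ∧
    (IsSection (P' ⊔ K) K ∧ IsSection P' (K ⊓ P') ∧
      secLEK (P' ⊔ K, K) (P, K) ∧ secLEP (P', K ⊓ P') (P', K') ∧
      secLEPK (P', K ⊓ P') (P' ⊔ K, K)) ∧
    (∀ s t : Subgroup G × Subgroup G, IsSection s.1 s.2 → IsSection t.1 t.2 →
      (secLE' s t ↔ ∃ a b : Subgroup G × Subgroup G,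
        IsSection a.1 a.2 ∧ IsSection b.1 b.2 ∧
        secLEP a s ∧ secLEPK a b ∧ secLEK b t)) := by
  have ex := secLE'_decomp_exists h hle
  refine ⟨⟨((P' ⊔ K, K), (P', K ⊓ P')), ex, ?_⟩, ex, fun s t _ ht => ⟨fun hst => ?_, ?_⟩⟩
  · rintro ⟨⟨A, B⟩, ⟨C, D⟩⟩ ⟨-, -, ⟨-, hB⟩, ⟨-, hC⟩, -, hD, hA⟩
    dsimp only at hA hB hC hD
    subst hB hC hD hA
    rfl
  · obtain ⟨h1, h2, h3, h4, h5⟩ := secLE'_decomp_exists ht hst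
    exact ⟨_, _, h2, h1, h4, h5, h3⟩
  · rintro ⟨a, b, -, -, ⟨⟨-, ha⟩, has⟩, ⟨⟨hab, -⟩, hinf, -⟩, ⟨hb, -⟩, hbt⟩
    refine ⟨has ▸ hab.trans hb, ?_⟩
    rw [← has, ← hbt, hinf]
    exact ha
end

section
/- Let G and U be finite groups, let (P,K) and (P',K') be sections of G, and let θ : P/K → U and θ' : P'/K' → U be group isomorphisms with graphs L and L' in G × U respectively. Then L' ≤ L if and only if (P',K') ≤_{P/K} (P,K) (i.e. P' ≤ P, K' ≤ K, and the canonical homomorphism P'/K' → P/K, pK' ↦ pK, is an isomorphism) and θ'(pK') = θ(pK) for all p ∈ P'. -/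
/-!
Every `p ∈ P'` gives a point `(p, θ'(pK'))` of `L'`, so `L' ≤ L` says exactly that `P' ≤ P` and that
`θ` and `θ'` agree on `P'`. Granted this, the remaining conditions are automatic: `K` and `K'` are
the kernels of `P → U` and `P' → U` (`iso_mk_eq_one_iff`), so agreement on `P'` forces
`K' = K ∩ P'`, and surjectivity of `θ'` together with injectivity of `θ` gives `P = P' K`.
-/

/-- The graph of an isomorphism `θ : P/K → U`, a subgroup of `G × U`, viewed as a
set of pairs: `{(g, u) : g ∈ P, θ(gK) = u}`. -/
def graphOf {G U : Type*} [Group G] [Group U] (P K : Subgroup G)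
    [(K.subgroupOf P).Normal] (θ : (↥P ⧸ K.subgroupOf P) ≃* U) : Set (G × U) :=
  {x | ∃ h : x.1 ∈ P, θ (QuotientGroup.mk ⟨x.1, h⟩) = x.2}

/-- The kernel of `P → P/K → U` is `K`, stated for elements of `G`. -/
theorem iso_mk_eq_one_iff {G U : Type*} [Group G] [Group U] {P K : Subgroup G}
    [(K.subgroupOf P).Normal] (θ : (↥P ⧸ K.subgroupOf P) ≃* U) {p : G} (h : p ∈ P) :
    θ (QuotientGroup.mk ⟨p, h⟩) = 1 ↔ p ∈ K := by
  rw [map_eq_one_iff θ θ.injective, QuotientGroup.eq_one_iff, Subgroup.mem_subgroupOf]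

/-- Let `(P,K)` and `(P',K')` be sections of `G` and let `θ : P/K → U` and
`θ' : P'/K' → U` be isomorphisms with graphs `L` and `L'` in `G × U`.  Then
`L' ≤ L` iff `(P',K') ≤_{P/K} (P,K)` (that is, `P' ≤ P`, `K' ≤ K`, and the canonical
homomorphism `P'/K' → P/K` is an isomorphism, i.e. injective and surjective) and
`θ'(pK') = θ(pK)` for all `p ∈ P'`. -/
theorem graph_le_graph_iff {G U : Type*} [Group G] [Group U] [Fintype G] [Fintype U]
    (P K P' K' : Subgroup G) (hKP : K ≤ P) (hKP' : K' ≤ P')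
    [(K.subgroupOf P).Normal] [(K'.subgroupOf P').Normal]
    (θ : (↥P ⧸ K.subgroupOf P) ≃* U) (θ' : (↥P' ⧸ K'.subgroupOf P') ≃* U) :
    graphOf P' K' θ' ⊆ graphOf P K θ ↔
      ((P' ≤ P ∧ K' ≤ K) ∧
        -- the canonical homomorphism `P'/K' → P/K`, `pK' ↦ pK`, is injective …
        (∀ p ∈ P', p ∈ K → p ∈ K') ∧
        -- … and surjective
        (∀ p ∈ P, ∃ p' ∈ P', p⁻¹ * p' ∈ K)) ∧
      ∀ (p : G) (h' : p ∈ P') (h : p ∈ P),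
        θ' (QuotientGroup.mk ⟨p, h'⟩) = θ (QuotientGroup.mk ⟨p, h⟩) := by
  constructor
  · intro hL
    have key : ∀ (p : G) (h' : p ∈ P'), ∃ h : p ∈ P,
        θ (QuotientGroup.mk ⟨p, h⟩) = θ' (QuotientGroup.mk ⟨p, h'⟩) :=
      fun p h' => hL (show (p, θ' (QuotientGroup.mk ⟨p, h'⟩)) ∈ graphOf P' K' θ' from ⟨h', rfl⟩)
    refine ⟨⟨⟨fun p h' => (key p h').1, fun p hp => ?_⟩, fun p h' hp => ?_, fun p h => ?_⟩,
      fun p h' _ => (key p h').2.symm⟩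
    · obtain ⟨h, e⟩ := key p (hKP' hp)
      rw [← iso_mk_eq_one_iff θ h, e, iso_mk_eq_one_iff θ']
      exact hp
    · obtain ⟨h, e⟩ := key p h'
      rw [← iso_mk_eq_one_iff θ' h', ← e, iso_mk_eq_one_iff θ]
      exact hp
    · obtain ⟨q, hq⟩ := θ'.surjective (θ (QuotientGroup.mk ⟨p, h⟩))
      obtain ⟨⟨p', h'⟩, rfl⟩ := QuotientGroup.mk_surjective q
      obtain ⟨h₁, e⟩ := key p' h'
      exact ⟨p', h', Subgroup.mem_subgroupOf.1 (QuotientGroup.eq.1 (θ.injective (e.trans hq)).symm)⟩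
  · rintro ⟨⟨⟨hP, -⟩, -⟩, he⟩ ⟨p, u⟩ ⟨h', e⟩
    exact ⟨hP h', (he p h' (hP h')).symm.trans e⟩
end

section
/- Let G1, G2 be finite groups and let L' ≤ L be subgroups of G1 × G2. Then there exists a unique pair (M', M) of subgroups of G1 × G2 such that L' ≤_P M' ≤_{P/K} M ≤_K L. Consequently, the inclusion order on subgroups of G1 × G2 decomposes as the relation product ≤ = ≤_K ∘ ≤_{P/K} ∘ ≤_P. -/
/-!
Given `L' ≤ L`, put `Pᵢ = pᵢ(L')` and `Kᵢ = kᵢ(L)`. The required pair is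
`M' = L ⊓ (P₁ × P₂)` and `M = L ⊓ ((P₁ ⊔ K₁) × (P₂ ⊔ K₂))`.

Any admissible pair satisfies `pᵢ(M') = Pᵢ`, `kᵢ(M') = Pᵢ ⊓ Kᵢ`, `pᵢ(M) = Pᵢ ⊔ Kᵢ`, `kᵢ(M) = Kᵢ`,
and `M' ≤ M ≤ L`. It is therefore contained in the pair above, which has the same projections and
kernels. Uniqueness follows because nested subgroups `N ≤ N'` of `G₁ × G₂` with `p₁(N) = p₁(N')`
and `k₂(N) = k₂(N')` coincide (`eq_of_le_of_proj1_of_ker2`).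
-/

/-- The projection `p₁(L)` of a subgroup `L ≤ G₁ × G₂` to `G₁`. -/
def proj1 {G₁ G₂ : Type*} [Group G₁] [Group G₂] (L : Subgroup (G₁ × G₂)) :
    Subgroup G₁ := L.map (MonoidHom.fst G₁ G₂)

/-- The projection `p₂(L)` of a subgroup `L ≤ G₁ × G₂` to `G₂`. -/
def proj2 {G₁ G₂ : Type*} [Group G₁] [Group G₂] (L : Subgroup (G₁ × G₂)) :
    Subgroup G₂ := L.map (MonoidHom.snd G₁ G₂)

/-- The first Goursat kernel `k₁(L) = {g₁ : (g₁, 1) ∈ L}`. -/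
def ker1 {G₁ G₂ : Type*} [Group G₁] [Group G₂] (L : Subgroup (G₁ × G₂)) :
    Subgroup G₁ where
  carrier := {g | (g, 1) ∈ L}
  one_mem' := L.one_mem
  mul_mem' := by intro a b ha hb; simpa using L.mul_mem ha hb
  inv_mem' := by intro a ha; simpa using L.inv_mem ha

/-- The second Goursat kernel `k₂(L) = {g₂ : (1, g₂) ∈ L}`. -/
def ker2 {G₁ G₂ : Type*} [Group G₁] [Group G₂] (L : Subgroup (G₁ × G₂)) :
    Subgroup G₂ where
  carrier := {g | ((1 : G₁), g) ∈ L}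
  one_mem' := L.one_mem
  mul_mem' := by intro a b ha hb; simpa using L.mul_mem ha hb
  inv_mem' := by intro a ha; simpa using L.inv_mem ha

/-- `L' ≤_P L`: containment with equal projections. -/
def subLEP {G₁ G₂ : Type*} [Group G₁] [Group G₂] (L' L : Subgroup (G₁ × G₂)) : Prop :=
  L' ≤ L ∧ proj1 L' = proj1 L ∧ proj2 L' = proj2 L

/-- `L' ≤_K L`: containment with equal Goursat kernels. -/
def subLEK {G₁ G₂ : Type*} [Group G₁] [Group G₂] (L' L : Subgroup (G₁ × G₂)) : Prop :=
  L' ≤ L ∧ ker1 L' = ker1 L ∧ ker2 L' = ker2 L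

/-- `L' ≤_{P/K} L`: containment such that the canonical maps
`p_i(L')/k_i(L') → p_i(L)/k_i(L)` are isomorphisms; equivalently
`p_i(L') ⊔ k_i(L) = p_i(L)` and `p_i(L') ⊓ k_i(L) = k_i(L')` for `i = 1, 2`. -/
def subLEPK {G₁ G₂ : Type*} [Group G₁] [Group G₂] (L' L : Subgroup (G₁ × G₂)) : Prop :=
  L' ≤ L ∧
    proj1 L' ⊔ ker1 L = proj1 L ∧ proj1 L' ⊓ ker1 L = ker1 L' ∧
    proj2 L' ⊔ ker2 L = proj2 L ∧ proj2 L' ⊓ ker2 L = ker2 L'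

section

variable {G₁ G₂ : Type*} [Group G₁] [Group G₂] {L L' N N' : Subgroup (G₁ × G₂)}

theorem mem_proj1 {a : G₁} : a ∈ proj1 L ↔ ∃ b, (a, b) ∈ L := by
  simp [proj1, Subgroup.mem_map]

theorem mem_proj2 {b : G₂} : b ∈ proj2 L ↔ ∃ a, (a, b) ∈ L := by
  simp [proj2, Subgroup.mem_map]

theorem mem_ker1 {a : G₁} : a ∈ ker1 L ↔ (a, 1) ∈ L := Iff.rfl

theorem mem_ker2 {b : G₂} : b ∈ ker2 L ↔ (1, b) ∈ L := Iff.rfl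

theorem proj1_mono (h : N ≤ N') : proj1 N ≤ proj1 N' := Subgroup.map_mono h

theorem proj2_mono (h : N ≤ N') : proj2 N ≤ proj2 N' := Subgroup.map_mono h

theorem ker1_le_proj1 : ker1 L ≤ proj1 L := fun _ h => mem_proj1.2 ⟨1, h⟩

theorem ker2_le_proj2 : ker2 L ≤ proj2 L := fun _ h => mem_proj2.2 ⟨1, h⟩

theorem le_prod_proj : L ≤ (proj1 L).prod (proj2 L) := fun x hx =>
  Subgroup.mem_prod.2 ⟨mem_proj1.2 ⟨x.2, hx⟩, mem_proj2.2 ⟨x.1, hx⟩⟩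

theorem proj1_inf_prod_le {A : Subgroup G₁} {B : Subgroup G₂} :
    proj1 (L ⊓ A.prod B) ≤ A := fun _ ha =>
  have ⟨_, h⟩ := mem_proj1.1 ha
  h.2.1

theorem proj2_inf_prod_le {A : Subgroup G₁} {B : Subgroup G₂} :
    proj2 (L ⊓ A.prod B) ≤ B := fun _ hb =>
  have ⟨_, h⟩ := mem_proj2.1 hb
  h.2.2

theorem ker1_inf_prod {A : Subgroup G₁} {B : Subgroup G₂} :
    ker1 (L ⊓ A.prod B) = A ⊓ ker1 L := by
  ext a
  simp [mem_ker1, Subgroup.mem_inf, Subgroup.mem_prod, and_comm]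

theorem ker2_inf_prod {A : Subgroup G₁} {B : Subgroup G₂} :
    ker2 (L ⊓ A.prod B) = B ⊓ ker2 L := by
  ext b
  simp [mem_ker2, Subgroup.mem_inf, Subgroup.mem_prod, and_comm]

/-- If `(a, b) ∈ N'` and `(a, y) ∈ N`, then `y⁻¹ b` lies in `k₂(N') = k₂(N)`, so `(a, b) ∈ N`. -/
theorem eq_of_le_of_proj1_of_ker2 (h : N ≤ N') (hp : proj1 N = proj1 N')
    (hk : ker2 N = ker2 N') : N = N' := by
  refine le_antisymm h ?_
  rintro ⟨a, b⟩ hab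
  obtain ⟨y, hy⟩ := mem_proj1.1 (hp ▸ mem_proj1.2 ⟨b, hab⟩ : a ∈ proj1 N)
  have h1 : y⁻¹ * b ∈ ker2 N' := by
    simpa [mem_ker2] using N'.mul_mem (N'.inv_mem (h hy)) hab
  rw [← hk, mem_ker2] at h1
  simpa using N.mul_mem hy h1

/-- The lower intermediate subgroup `M'` for `L' ≤ L`: the largest subgroup of `L` with the
projections of `L'`. -/
def lowerMid (L' L : Subgroup (G₁ × G₂)) : Subgroup (G₁ × G₂) :=
  L ⊓ (proj1 L').prod (proj2 L')

theorem le_lowerMid (h : L' ≤ L) : L' ≤ lowerMid L' L := le_inf h le_prod_proj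

/-- The upper intermediate subgroup `M` for `L' ≤ L`, which equals `L' (k₁(L) × k₂(L))`; it is
encoded as an intersection, so that no normality is needed to describe its elements. -/
def upperMid (L' L : Subgroup (G₁ × G₂)) : Subgroup (G₁ × G₂) :=
  L ⊓ (proj1 L' ⊔ ker1 L).prod (proj2 L' ⊔ ker2 L)

theorem lowerMid_le_upperMid : lowerMid L' L ≤ upperMid L' L :=
  inf_le_inf_left _ (Subgroup.prod_mono le_sup_left le_sup_left)

theorem proj1_lowerMid (h : L' ≤ L) : proj1 (lowerMid L' L) = proj1 L' :=
  le_antisymm proj1_inf_prod_le (proj1_mono (le_lowerMid h))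

theorem proj2_lowerMid (h : L' ≤ L) : proj2 (lowerMid L' L) = proj2 L' :=
  le_antisymm proj2_inf_prod_le (proj2_mono (le_lowerMid h))

theorem ker1_upperMid : ker1 (upperMid L' L) = ker1 L :=
  ker1_inf_prod.trans (inf_eq_right.2 le_sup_right)

theorem ker2_upperMid : ker2 (upperMid L' L) = ker2 L :=
  ker2_inf_prod.trans (inf_eq_right.2 le_sup_right)

theorem proj1_upperMid (h : L' ≤ L) : proj1 (upperMid L' L) = proj1 L' ⊔ ker1 L :=
  le_antisymm proj1_inf_prod_le <|
    sup_le (proj1_mono ((le_lowerMid h).trans lowerMid_le_upperMid))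
      (ker1_upperMid.symm.le.trans ker1_le_proj1)

theorem proj2_upperMid (h : L' ≤ L) : proj2 (upperMid L' L) = proj2 L' ⊔ ker2 L :=
  le_antisymm proj2_inf_prod_le <|
    sup_le (proj2_mono ((le_lowerMid h).trans lowerMid_le_upperMid))
      (ker2_upperMid.symm.le.trans ker2_le_proj2)

theorem mid_spec (h : L' ≤ L) :
    subLEP L' (lowerMid L' L) ∧ subLEPK (lowerMid L' L) (upperMid L' L) ∧
      subLEK (upperMid L' L) L := by
  refine ⟨⟨le_lowerMid h, (proj1_lowerMid h).symm, (proj2_lowerMid h).symm⟩,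
    ⟨lowerMid_le_upperMid, ?_, ?_, ?_, ?_⟩, ⟨inf_le_left, ker1_upperMid, ker2_upperMid⟩⟩
  · rw [proj1_lowerMid h, ker1_upperMid, proj1_upperMid h]
  · rw [proj1_lowerMid h, ker1_upperMid, lowerMid, ker1_inf_prod]
  · rw [proj2_lowerMid h, ker2_upperMid, proj2_upperMid h]
  · rw [proj2_lowerMid h, ker2_upperMid, lowerMid, ker2_inf_prod]

theorem mid_unique (h : L' ≤ L) {M' M : Subgroup (G₁ × G₂)} (hP : subLEP L' M')
    (hPK : subLEPK M' M) (hK : subLEK M L) : M' = lowerMid L' L ∧ M = upperMid L' L := by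
  obtain ⟨-, p1, p2⟩ := hP
  obtain ⟨hM, s1, -, s2, i2⟩ := hPK
  obtain ⟨hL, k1, k2⟩ := hK
  rw [← p1, k1] at s1
  rw [← p2, k2] at s2
  rw [← p2, k2] at i2
  constructor
  · refine eq_of_le_of_proj1_of_ker2 (le_inf (hM.trans hL) ?_) ?_ ?_
    · rw [p1, p2]
      exact le_prod_proj
    · rw [proj1_lowerMid h, p1]
    · rw [← i2, lowerMid, ker2_inf_prod]
  · refine eq_of_le_of_proj1_of_ker2 (le_inf hL ?_) ?_ ?_
    · rw [s1, s2]
      exact le_prod_proj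
    · rw [proj1_upperMid h, s1]
    · rw [ker2_upperMid, k2]

end

/-- For subgroups `L' ≤ L` of `G₁ × G₂` there is a unique pair `(M', M)` with
`L' ≤_P M' ≤_{P/K} M ≤_K L`; consequently the inclusion order on subgroups of
`G₁ × G₂` decomposes as the relation product `≤ = ≤_K ∘ ≤_{P/K} ∘ ≤_P`. -/
theorem subgroup_order_decomposition {G₁ G₂ : Type*} [Group G₁] [Group G₂]
    [Fintype G₁] [Fintype G₂] :
    (∀ L' L : Subgroup (G₁ × G₂), L' ≤ L →
      ∃! M : Subgroup (G₁ × G₂) × Subgroup (G₁ × G₂),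
        subLEP L' M.1 ∧ subLEPK M.1 M.2 ∧ subLEK M.2 L) ∧
    (∀ L' L : Subgroup (G₁ × G₂),
      L' ≤ L ↔ ∃ M' M : Subgroup (G₁ × G₂),
        subLEP L' M' ∧ subLEPK M' M ∧ subLEK M L) := by
  refine ⟨fun L' L h => ⟨(lowerMid L' L, upperMid L' L), mid_spec h, ?_⟩,
    fun L' L => ⟨fun h => ⟨_, _, mid_spec h⟩, ?_⟩⟩
  · rintro ⟨M', M⟩ ⟨hP, hPK, hK⟩
    obtain ⟨h1, h2⟩ := mid_unique h hP hPK hK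
    exact Prod.ext h1 h2
  · rintro ⟨M', M, hP, hPK, hK⟩
    exact hP.1.trans (hPK.1.trans hK.1)
end
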